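/- The function g(x) = (−1 + 2x − √(1 + 4(1 − 3x)x) + 2√(1 − 4x²))/4, defined for x in a neighborhood of 0 (where both radicands are positive), satisfies g(x) = x² + O(x³) as x → 0; in particular there exists δ > 0 such that g(x) > 0 for all x ∈ (0, δ), and x = 0 is a zero of g of multiplicity exactly two. Consequently the simple two-fold cycle Γ₀ of the piecewise Hamiltonian system Z_{0,0} is elementary and stable. -/

import Mathlib

/-!
The displacement function is the difference `ξ⁺ - ξ⁻` of two transition maps that are smooth
at `0`. Both are affine combinations of `x` and the square root of a quadratic polynomial, so their
second-order jets at `0` are explicit: value `1/2` and slope `0` for both, and second derivatives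
`-2` and `-4`. Hence the displacement vanishes at `0` to order exactly two, with second
derivative `2`. Taylor's theorem then gives `x² + O(x³)`, and positivity to the right of `0` holds
because a function is asymptotically equivalent to its first nonvanishing Taylor term.
-/

open Filter Topology Asymptotics
open scoped Nat

section Taylor

variable {E : Type*} [NormedAddCommGroup E] [NormedSpace ℝ E] {f : ℝ → E} {x₀ : ℝ} {n : ℕ}

theorem taylor_isLittleO_of_contDiffAt (hf : ContDiffAt ℝ n f x₀) :
    (fun x => f x -
        ∑ k ∈ Finset.range (n + 1), ((k ! : ℝ)⁻¹ * (x - x₀) ^ k) • iteratedDeriv k f x₀)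
      =o[𝓝 x₀] fun x => (x - x₀) ^ n := by
  obtain ⟨u, hu, hfu⟩ := hf.contDiffOn le_rfl (by simp)
  obtain ⟨r, hr, hball⟩ := Metric.mem_nhds_iff.mp hu
  have hx₀ : x₀ ∈ Metric.ball x₀ r := Metric.mem_ball_self hr
  have hfball : ContDiffOn ℝ n f (Metric.ball x₀ r) := hfu.mono hball
  have h := taylor_isLittleO (convex_ball x₀ r) hx₀ hfball
  rw [Metric.isOpen_ball.nhdsWithin_eq hx₀] at h
  simpa only [taylor_within_apply, iteratedDerivWithin_of_isOpen Metric.isOpen_ball hx₀] using h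

theorem taylor_isBigO_of_contDiffAt (hf : ContDiffAt ℝ (n + 1) f x₀) :
    (fun x => f x -
        ∑ k ∈ Finset.range (n + 1), ((k ! : ℝ)⁻¹ * (x - x₀) ^ k) • iteratedDeriv k f x₀)
      =O[𝓝 x₀] fun x => (x - x₀) ^ (n + 1) := by
  have hlast : (fun x => (((n + 1)! : ℝ)⁻¹ * (x - x₀) ^ (n + 1)) • iteratedDeriv (n + 1) f x₀)
      =O[𝓝 x₀] fun x => (x - x₀) ^ (n + 1) := by
    simpa using ((isBigO_refl _ _).const_mul_left ((n + 1)! : ℝ)⁻¹).smul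
      (isBigO_const_const (iteratedDeriv (n + 1) f x₀) (one_ne_zero (α := ℝ)) (𝓝 x₀))
  have hrem := taylor_isLittleO_of_contDiffAt (n := n + 1) (mod_cast hf)
  refine (hrem.isBigO.add hlast).congr_left fun x => ?_
  rw [Finset.sum_range_succ _ (n + 1)]
  abel

theorem sum_taylor_eq_leading_term (hvanish : ∀ k < n, iteratedDeriv k f x₀ = 0) (x : ℝ) :
    ∑ k ∈ Finset.range (n + 1), ((k ! : ℝ)⁻¹ * (x - x₀) ^ k) • iteratedDeriv k f x₀ =
      ((n ! : ℝ)⁻¹ * (x - x₀) ^ n) • iteratedDeriv n f x₀ := by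
  rw [Finset.sum_range_succ, Finset.sum_eq_zero, zero_add]
  intro k hk
  rw [hvanish k (Finset.mem_range.mp hk), smul_zero]

end Taylor

theorem eventually_pos_nhdsGT_of_iteratedDeriv_pos {f : ℝ → ℝ} {x₀ : ℝ} {n : ℕ}
    (hf : ContDiffAt ℝ n f x₀) (hvanish : ∀ k < n, iteratedDeriv k f x₀ = 0)
    (hpos : 0 < iteratedDeriv n f x₀) : ∀ᶠ x in 𝓝[>] x₀, 0 < f x := by
  set leading : ℝ → ℝ := fun x => (n ! : ℝ)⁻¹ * (x - x₀) ^ n * iteratedDeriv n f x₀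
  have hrem : (f - leading) =o[𝓝 x₀] fun x => (x - x₀) ^ n := by
    refine (taylor_isLittleO_of_contDiffAt hf).congr_left fun x => ?_
    rw [sum_taylor_eq_leading_term hvanish, smul_eq_mul, Pi.sub_apply]
  have hpow : (fun x => (x - x₀) ^ n) =O[𝓝 x₀] leading := by
    refine (isBigO_const_mul_self ((n ! : ℝ) * (iteratedDeriv n f x₀)⁻¹) leading _).congr_left
      fun x => ?_
    simp only [leading]
    field_simp
  have hequiv : f ~[𝓝[>] x₀] leading := (hrem.trans_isBigO hpow).mono nhdsWithin_le_nhds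
  refine hequiv.eventually_pos ?_
  filter_upwards [self_mem_nhdsWithin] with x hx
  have : 0 < x - x₀ := sub_pos.mpr hx
  positivity

theorem iteratedDeriv_two_sqrt {u : ℝ → ℝ} {x : ℝ} (hu : ContDiffAt ℝ 2 u x) (hx : 0 < u x) :
    iteratedDeriv 2 (fun y => √(u y)) x =
      iteratedDeriv 2 u x / (2 * √(u x)) - deriv u x ^ 2 / (4 * √(u x) ^ 3) := by
  have hdiff : DifferentiableAt ℝ u x := hu.differentiableAt two_ne_zero
  have hdiff_deriv : DifferentiableAt ℝ (deriv u) x :=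
    (hu.derivWithin (m := 1) (by norm_num)).differentiableAt one_ne_zero
  have hfirst : deriv (fun y => √(u y)) =ᶠ[𝓝 x] fun y => deriv u y / (2 * √(u y)) := by
    filter_upwards [hu.eventually (by simp), hu.continuousAt.eventually_ne hx.ne'] with y hy hy₀
    exact deriv_sqrt (hy.differentiableAt two_ne_zero) hy₀
  simp only [iteratedDeriv_succ, iteratedDeriv_zero]
  rw [hfirst.deriv_eq,
    deriv_fun_div hdiff_deriv ((hdiff.sqrt hx.ne').const_mul 2) (by positivity),
    deriv_const_mul _ (hdiff.sqrt hx.ne'), deriv_sqrt hdiff hx.ne']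
  field_simp
  ring

section Quadratic

variable {a : ℝ} (b c : ℝ)

theorem deriv_quadratic :
    deriv (fun x : ℝ => a + b * x + c * x ^ 2) = fun x => b + 2 * c * x := by
  ext x
  have hlinear := ((hasDerivAt_id' x).const_mul b).const_add a
  have hsquare := (hasDerivAt_pow 2 x).const_mul c
  exact (hlinear.add hsquare).deriv.trans (by norm_num; ring)

theorem iteratedDeriv_two_quadratic (x : ℝ) :
    iteratedDeriv 2 (fun x : ℝ => a + b * x + c * x ^ 2) x = 2 * c := by
  simp [iteratedDeriv_succ, deriv_quadratic]

theorem deriv_sqrt_quadratic_zero (ha : 0 < a) :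
    deriv (fun x => √(a + b * x + c * x ^ 2)) 0 = b / (2 * √a) := by
  rw [deriv_sqrt (by fun_prop) (by simpa using ha.ne'), deriv_quadratic]
  simp

theorem iteratedDeriv_two_sqrt_quadratic_zero (ha : 0 < a) :
    iteratedDeriv 2 (fun x => √(a + b * x + c * x ^ 2)) 0 = c / √a - b ^ 2 / (4 * √a ^ 3) := by
  rw [iteratedDeriv_two_sqrt (by fun_prop) (by simpa using ha), iteratedDeriv_two_quadratic,
    deriv_quadratic]
  simp [mul_div_mul_left]

end Quadratic

/-- The transition map `ξ⁺` of `Z_{0,0}` on the line `y = 0`, along the orbits in `y > 0`. -/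
noncomputable def upperTransition (x : ℝ) : ℝ := √(1 - 4 * x ^ 2) / 2

/-- The transition map `ξ⁻` of `Z_{0,0}` on the line `y = 0`, along the orbits in `y < 0`. -/
noncomputable def lowerTransition (x : ℝ) : ℝ := (1 - 2 * x + √((1 + 6 * x) * (1 - 2 * x))) / 4

/-- The displacement function `ξ⁺ - ξ⁻` of `Z_{0,0}`. -/
noncomputable def displacement (x : ℝ) : ℝ := upperTransition x - lowerTransition x

theorem displacement_eq :
    displacement = fun x =>
      (-1 + 2 * x - √(1 + 4 * (1 - 3 * x) * x) + 2 * √(1 - 4 * x ^ 2)) / 4 := by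
  ext x
  have hradicand : (1 + 6 * x) * (1 - 2 * x) = 1 + 4 * (1 - 3 * x) * x := by ring
  rw [displacement, upperTransition, lowerTransition, hradicand]
  ring

theorem upperTransition_eq_sqrt_quadratic :
    upperTransition = fun x => √(1 + 0 * x + (-4) * x ^ 2) / 2 := by
  ext x
  rw [upperTransition]
  ring_nf

theorem lowerTransition_eq_sqrt_quadratic :
    lowerTransition = fun x => (1 - 2 * x + √(1 + 4 * x + (-12) * x ^ 2)) / 4 := by
  ext x
  rw [lowerTransition]
  ring_nf

theorem contDiffAt_upperTransition {n : WithTop ℕ∞} : ContDiffAt ℝ n upperTransition 0 := by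
  unfold upperTransition
  fun_prop (disch := norm_num)

theorem contDiffAt_lowerTransition {n : WithTop ℕ∞} : ContDiffAt ℝ n lowerTransition 0 := by
  unfold lowerTransition
  fun_prop (disch := norm_num)

theorem contDiffAt_displacement {n : WithTop ℕ∞} : ContDiffAt ℝ n displacement 0 :=
  contDiffAt_upperTransition.sub contDiffAt_lowerTransition

theorem deriv_upperTransition_zero : deriv upperTransition 0 = 0 := by
  rw [upperTransition_eq_sqrt_quadratic, deriv_div_const, deriv_sqrt_quadratic_zero 0 (-4) one_pos]
  norm_num

theorem deriv_lowerTransition_zero : deriv lowerTransition 0 = 0 := by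
  rw [lowerTransition_eq_sqrt_quadratic, deriv_div_const,
    deriv_fun_add (by fun_prop) (by fun_prop (disch := norm_num)),
    deriv_sqrt_quadratic_zero 4 (-12) one_pos]
  norm_num

theorem iteratedDeriv_two_upperTransition_zero : iteratedDeriv 2 upperTransition 0 = -2 := by
  rw [upperTransition_eq_sqrt_quadratic, iteratedDeriv_div_const,
    iteratedDeriv_two_sqrt_quadratic_zero 0 (-4) one_pos]
  norm_num

theorem iteratedDeriv_two_lowerTransition_zero : iteratedDeriv 2 lowerTransition 0 = -4 := by
  have haffine : iteratedDeriv 2 (fun x : ℝ => 1 - 2 * x) 0 = 0 := by simp [iteratedDeriv_succ]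
  rw [lowerTransition_eq_sqrt_quadratic, iteratedDeriv_div_const,
    iteratedDeriv_fun_add (by fun_prop) (by fun_prop (disch := norm_num)),
    haffine, iteratedDeriv_two_sqrt_quadratic_zero 4 (-12) one_pos]
  norm_num

theorem displacement_apply_zero : displacement 0 = 0 := by
  norm_num [displacement, upperTransition, lowerTransition]

theorem deriv_displacement_zero : deriv displacement 0 = 0 := by
  unfold displacement
  rw [deriv_fun_sub (contDiffAt_upperTransition.differentiableAt one_ne_zero)
    (contDiffAt_lowerTransition.differentiableAt one_ne_zero), deriv_upperTransition_zero,
    deriv_lowerTransition_zero, sub_zero]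

theorem iteratedDeriv_two_displacement_zero : iteratedDeriv 2 displacement 0 = 2 := by
  unfold displacement
  rw [iteratedDeriv_fun_sub contDiffAt_upperTransition contDiffAt_lowerTransition,
    iteratedDeriv_two_upperTransition_zero, iteratedDeriv_two_lowerTransition_zero]
  norm_num

theorem iteratedDeriv_displacement_zero_of_lt_two : ∀ k < 2, iteratedDeriv k displacement 0 = 0
  | 0, _ => by rw [iteratedDeriv_zero, displacement_apply_zero]
  | 1, _ => by rw [iteratedDeriv_one, deriv_displacement_zero]

theorem displacement_sub_sq_isBigO :
    (fun x => displacement x - x ^ 2) =O[𝓝 0] fun x => x ^ 3 := by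
  refine (taylor_isBigO_of_contDiffAt (n := 2) contDiffAt_displacement).congr (fun x => ?_)
    fun x => by rw [sub_zero]
  rw [sum_taylor_eq_leading_term iteratedDeriv_displacement_zero_of_lt_two,
    iteratedDeriv_two_displacement_zero, sub_zero, smul_eq_mul, Nat.factorial_two, Nat.cast_two]
  ring

/- STATEMENT 15: the displacement function of the piecewise Hamiltonian system
Z_{0,0}, g(x) = (−1 + 2x − √(1 + 4(1 − 3x)x) + 2√(1 − 4x²))/4, satisfies
g(x) = x² + O(x³), is positive on (0, δ), and has at 0 a zero of multiplicity
exactly two with positive second derivative: the simple two-fold cycle Γ₀ is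
elementary and stable. -/
theorem stmt_15 :
    let g : ℝ → ℝ := fun x =>
      (-1 + 2 * x - Real.sqrt (1 + 4 * (1 - 3 * x) * x)
        + 2 * Real.sqrt (1 - 4 * x ^ 2)) / 4
    (∃ δ > (0 : ℝ), ∃ C > (0 : ℝ), ∀ x : ℝ, |x| < δ → |g x - x ^ 2| ≤ C * |x| ^ 3) ∧
    (∃ δ > (0 : ℝ), ∀ x ∈ Set.Ioo (0 : ℝ) δ, 0 < g x) ∧
    g 0 = 0 ∧ deriv g 0 = 0 ∧ deriv (deriv g) 0 ≠ 0 ∧ 0 < deriv (deriv g) 0 := by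
  intro g
  have hg : g = displacement := displacement_eq.symm
  have hsecond : deriv (deriv displacement) 0 = 2 := by
    rw [← iteratedDeriv_two_displacement_zero, iteratedDeriv_succ, iteratedDeriv_one]
  have hpos : ∀ᶠ x in 𝓝[>] 0, 0 < displacement x :=
    eventually_pos_nhdsGT_of_iteratedDeriv_pos contDiffAt_displacement
      iteratedDeriv_displacement_zero_of_lt_two (by norm_num [iteratedDeriv_two_displacement_zero])
  obtain ⟨C, hC, hbound⟩ := displacement_sub_sq_isBigO.exists_pos
  obtain ⟨δ, hδ, hbound⟩ := Metric.eventually_nhds_iff.mp hbound.bound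
  obtain ⟨ε, hε, hpos⟩ := mem_nhdsGT_iff_exists_Ioo_subset.mp hpos
  rw [hg, hsecond]
  refine ⟨⟨δ, hδ, C, hC, fun x hx => ?_⟩, ⟨ε, hε, fun x hx => hpos hx⟩,
    displacement_apply_zero, deriv_displacement_zero, two_ne_zero, two_pos⟩
  simpa using hbound (y := x) (by simpa using hx)
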